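/- Let L ≥ 3 be an odd integer and let C be a CAC of length L and weight 3 all of whose codewords are equi-difference, with leave Λ = Z_L \ ⋃_{I ∈ C} d(I). If |Λ| < 4 and it is not the case that 3 divides L and both L/3 and 2L/3 (as elements of Z_L) belong to Λ, then |C| = M^e(L,3) = M(L,3); in particular, C is an optimal CAC of length L and weight 3. -/

import Mathlib

open Finset

/-- The set of differences of a codeword `I ⊆ ℤ_L`. -/
def dset {L : ℕ} (I : Finset (ZMod L)) : Finset (ZMod L) :=
  (I ×ˢ I).image fun p => p.1 - p.2

/-- The set of nonzero differences. -/
def dstar {L : ℕ} (I : Finset (ZMod L)) : Finset (ZMod L) := dset I \ {0}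

/-- A conflict-avoiding code of length `L` and weight `ω`. -/
def IsCAC (L ω : ℕ) (C : Finset (Finset (ZMod L))) : Prop :=
  (∀ I ∈ C, I.card = ω) ∧
  ∀ I ∈ C, ∀ J ∈ C, I ≠ J → Disjoint (dstar I) (dstar J)

/-- `M(L,ω)`: the maximum size of a CAC of length `L` and weight `ω`. -/
noncomputable def MCAC (L ω : ℕ) : ℕ :=
  sSup {n | ∃ C : Finset (Finset (ZMod L)), IsCAC L ω C ∧ C.card = n}

/-- An equi-difference codeword of weight three: `I = {0, g, 2g}` for some generator
`1 ≤ g ≤ L/2`. -/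
def IsEquiDiff {L : ℕ} (I : Finset (ZMod L)) : Prop :=
  ∃ g : ℕ, 1 ≤ g ∧ 2 * g ≤ L ∧ I = {0, (g : ZMod L), ((2 * g : ℕ) : ZMod L)}

/-- `M^e(L,ω)`: the maximum size of a CAC of length `L` and weight `ω` all of whose
codewords are equi-difference. -/
noncomputable def MeCAC (L ω : ℕ) : ℕ :=
  sSup {n | ∃ C : Finset (Finset (ZMod L)),
    IsCAC L ω C ∧ (∀ I ∈ C, IsEquiDiff I) ∧ C.card = n}

/-- The leave of a CAC `C` of length `L`: `Λ = ℤ_L \ ⋃_{I ∈ C} d(I)`. -/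
def leave {L : ℕ} (C : Finset (Finset (ZMod L))) : Set (ZMod L) :=
  Set.univ \ ⋃ I ∈ C, (dset I : Set (ZMod L))

/-!
A nonzero `u` with `3 * u = 0` exists in `ℤ_L` only when `3 ∣ L`, and then it is `± L / 3`. For odd
`L`, a codeword of weight three has at least four nonzero differences, unless such a `u` is among
them, when it has at least two; for an equi-difference codeword both bounds are equalities. Hence,
writing `e` for the number of codewords with such a difference, every code `D` of weight three has
`4 |D| ≤ ∑ |d*(I)| + 2 e(D) ≤ L - 1 + 2 e(D)`, whereas an equi-difference code `C` with leave `Λ`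
has `4 |C| ≥ L - 1 - |Λ| + 2 e(C)`. Since `± L / 3` lies in the differences of at most one codeword,
`e(D) ≤ 1`; and if `± L / 3` is not left uncovered by `C`, then `e(D) ≤ e(C)`, so
`4 |D| ≤ 4 |C| + |Λ| < 4 |C| + 4`.
-/

section Differences

variable {L : ℕ} {I : Finset (ZMod L)} {C : Finset (Finset (ZMod L))} {u v : ZMod L}

lemma mem_dset : u ∈ dset I ↔ ∃ a ∈ I, ∃ b ∈ I, a - b = u := by
  simp only [dset, mem_image, mem_product, Prod.exists, and_assoc, exists_and_left]

lemma mem_dstar : u ∈ dstar I ↔ u ∈ dset I ∧ u ≠ 0 := by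
  simp only [dstar, mem_sdiff, mem_singleton]

lemma mem_leave : u ∈ leave C ↔ ∀ I ∈ C, u ∉ dset I := by
  simp [leave]

lemma sub_mem_dstar {a b : ZMod L} (ha : a ∈ I) (hb : b ∈ I) (hab : a ≠ b) : a - b ∈ dstar I :=
  mem_dstar.2 ⟨mem_dset.2 ⟨a, ha, b, hb, rfl⟩, sub_ne_zero.2 hab⟩

lemma neg_mem_dset (hu : u ∈ dset I) : -u ∈ dset I := by
  obtain ⟨a, ha, b, hb, rfl⟩ := mem_dset.1 hu
  exact mem_dset.2 ⟨b, hb, a, ha, (neg_sub a b).symm⟩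

lemma neg_mem_dstar (hu : u ∈ dstar I) : -u ∈ dstar I :=
  have ⟨hu, hu₀⟩ := mem_dstar.1 hu
  mem_dstar.2 ⟨neg_mem_dset hu, neg_ne_zero.2 hu₀⟩

lemma neg_mem_leave (hu : u ∈ leave C) : -u ∈ leave C :=
  mem_leave.2 fun I hI h => mem_leave.1 hu I hI (neg_neg u ▸ neg_mem_dset h)

lemma two_le_card_dstar (hodd : Odd L) (hu : u ∈ dstar I) : 2 ≤ #(dstar I) := by
  rw [← card_pair (ZMod.ne_neg_self hodd (mem_dstar.1 hu).2)]
  refine card_le_card ?_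
  simp [insert_subset_iff, hu, neg_mem_dstar hu]

lemma four_le_card_dstar (hodd : Odd L) (hu : u ∈ dstar I) (hv : v ∈ dstar I)
    (huv : u ≠ v) (huv' : u ≠ -v) : 4 ≤ #(dstar I) := by
  have hu' : u ≠ -u := ZMod.ne_neg_self hodd (mem_dstar.1 hu).2
  have hv' : v ≠ -v := ZMod.ne_neg_self hodd (mem_dstar.1 hv).2
  have hcard : #{u, -u, v, -v} = 4 := by
    rw [card_insert_of_notMem, card_insert_of_notMem, card_pair hv']
    · simp [neg_eq_iff_eq_neg, huv, huv']
    · simp [hu', huv, huv']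
  rw [← hcard]
  refine card_le_card ?_
  simp [insert_subset_iff, hu, hv, neg_mem_dstar]

end Differences

section Counting

variable {L ω : ℕ} [NeZero L] {C : Finset (Finset (ZMod L))}

lemma IsCAC.sum_card_dstar_lt (hC : IsCAC L ω C) : ∑ I ∈ C, #(dstar I) < L :=
  calc ∑ I ∈ C, #(dstar I)
    _ = #(C.biUnion dstar) := (card_biUnion hC.2).symm
    _ < #(univ : Finset (ZMod L)) := by
      refine card_lt_card (ssubset_univ_iff.2 fun h => ?_)
      obtain ⟨I, -, h₀⟩ := mem_biUnion.1 (h ▸ mem_univ (0 : ZMod L))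
      exact (mem_dstar.1 h₀).2 rfl
    _ = L := by rw [card_univ, ZMod.card]

lemma length_le_sum_card_dstar_add_ncard_leave (C : Finset (Finset (ZMod L))) :
    L ≤ ∑ I ∈ C, #(dstar I) + (leave C).ncard + 1 := by
  classical
  have hcover : (univ : Finset (ZMod L)) ⊆ insert 0 (C.biUnion dstar ∪ (leave C).toFinset) := by
    intro u _
    simp only [mem_insert, mem_union, mem_biUnion, Set.mem_toFinset, mem_dstar, mem_leave]
    grind
  calc L = #(univ : Finset (ZMod L)) := by rw [card_univ, ZMod.card]
    _ ≤ #(C.biUnion dstar ∪ (leave C).toFinset) + 1 :=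
      (card_le_card hcover).trans (card_insert_le _ _)
    _ ≤ #(C.biUnion dstar) + #(leave C).toFinset + 1 := by grw [card_union_le]
    _ ≤ ∑ I ∈ C, #(dstar I) + (leave C).ncard + 1 := by
      grw [card_biUnion_le, Set.ncard_eq_toFinset_card']

end Counting

section ThreeTorsion

variable {L : ℕ} {u v : ZMod L}

lemma three_dvd_and_eq_or_eq_neg_of_three_mul_eq_zero [NeZero L] (hu : u ≠ 0) (hu₃ : 3 * u = 0) :
    3 ∣ L ∧ (u = (L / 3 : ℕ) ∨ u = -(L / 3 : ℕ)) := by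
  have hlt : u.val < L := u.val_lt
  have hpos : u.val ≠ 0 := mt (ZMod.val_eq_zero u).1 hu
  have hcast : (u.val : ZMod L) = u := ZMod.natCast_zmod_val u
  obtain ⟨k, hk⟩ : L ∣ 3 * u.val := by
    rw [← ZMod.natCast_eq_zero_iff, Nat.cast_mul, hcast]
    exact_mod_cast hu₃
  have hk3 : k < 3 := by
    by_contra! h
    have : L * 3 ≤ L * k := Nat.mul_le_mul_left L h
    omega
  interval_cases k
  · omega
  · have hval : u.val = L / 3 := by omega
    exact ⟨by omega, .inl (hval ▸ hcast.symm)⟩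
  · have hval : u.val + L / 3 = L := by omega
    refine ⟨by omega, .inr (eq_neg_of_add_eq_zero_left ?_)⟩
    rw [← hcast, ← Nat.cast_add, hval, ZMod.natCast_self]

lemma eq_or_eq_neg_of_three_mul_eq_zero [NeZero L] (hu : u ≠ 0) (hu₃ : 3 * u = 0)
    (hv : v ≠ 0) (hv₃ : 3 * v = 0) : u = v ∨ u = -v := by
  have hu' := (three_dvd_and_eq_or_eq_neg_of_three_mul_eq_zero hu hu₃).2
  have hv' := (three_dvd_and_eq_or_eq_neg_of_three_mul_eq_zero hv hv₃).2
  grind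

lemma natCast_two_mul_div_three (h : 3 ∣ L) :
    ((2 * L / 3 : ℕ) : ZMod L) = -((L / 3 : ℕ) : ZMod L) := by
  have hsum : 2 * L / 3 + L / 3 = L := by omega
  rw [eq_neg_iff_add_eq_zero, ← Nat.cast_add, hsum, ZMod.natCast_self]

lemma notMem_leave_of_three_mul_eq_zero [NeZero L] {C : Finset (Finset (ZMod L))}
    (hnot : ¬ (3 ∣ L ∧ ((L / 3 : ℕ) : ZMod L) ∈ leave C ∧ ((2 * L / 3 : ℕ) : ZMod L) ∈ leave C))
    (hu : u ≠ 0) (hu₃ : 3 * u = 0) : u ∉ leave C := by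
  intro hmem
  obtain ⟨hdvd, hu_eq⟩ := three_dvd_and_eq_or_eq_neg_of_three_mul_eq_zero hu hu₃
  have hthird : ((L / 3 : ℕ) : ZMod L) ∈ leave C := by
    rcases hu_eq with h | h
    · exact h ▸ hmem
    · exact neg_eq_iff_eq_neg.2 h ▸ neg_mem_leave hmem
  exact hnot ⟨hdvd, hthird, natCast_two_mul_div_three hdvd ▸ neg_mem_leave hthird⟩

/-- A codeword with a nonzero difference `u` such that `3 * u = 0`. For odd `L`, these are the only
codewords of weight three that may have fewer than four nonzero differences. -/
def HasThreeTorsion (I : Finset (ZMod L)) : Prop := ∃ u ∈ dstar I, 3 * u = 0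

instance : DecidablePred (HasThreeTorsion (L := L)) :=
  fun I => inferInstanceAs (Decidable (∃ u ∈ dstar I, 3 * u = 0))

end ThreeTorsion

section Codewords

variable {L : ℕ} {I : Finset (ZMod L)}

lemma four_le_card_dstar_of_not_hasThreeTorsion (hodd : Odd L) (hI : #I = 3)
    (htor : ¬ HasThreeTorsion I) : 4 ≤ #(dstar I) := by
  obtain ⟨x, y, z, hxy, hxz, hyz, rfl⟩ := card_eq_three.1 hI
  have hx_sub_y : x - y ∈ dstar {x, y, z} := sub_mem_dstar (by simp) (by simp) hxy
  have hy_sub_z : y - z ∈ dstar {x, y, z} := sub_mem_dstar (by simp) (by simp) hyz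
  have hx_sub_z : x - z ∈ dstar {x, y, z} := sub_mem_dstar (by simp) (by simp) hxz
  by_cases h₁ : x - y = -(x - z)
  · refine four_le_card_dstar hodd hy_sub_z hx_sub_z (fun h => hxy (sub_left_injective h).symm) ?_
    intro h₂
    exact htor ⟨x - z, hx_sub_z, by linear_combination h₁ + h₂⟩
  · exact four_le_card_dstar hodd hx_sub_y hx_sub_z (fun h => hyz (sub_right_injective h)) h₁

lemma two_le_card_dstar_of_hasThreeTorsion (hodd : Odd L) (htor : HasThreeTorsion I) :
    2 ≤ #(dstar I) :=
  have ⟨_, hu, _⟩ := htor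
  two_le_card_dstar hodd hu

lemma IsEquiDiff.exists_dstar_subset (hI : IsEquiDiff I) :
    ∃ g : ZMod L, dstar I ⊆ {g, -g, 2 * g, -(2 * g)} := by
  obtain ⟨g, -, -, rfl⟩ := hI
  refine ⟨g, fun u hu => ?_⟩
  obtain ⟨hu, hu₀⟩ := mem_dstar.1 hu
  obtain ⟨a, ha, b, hb, rfl⟩ := mem_dset.1 hu
  simp only [mem_insert, mem_singleton, Nat.cast_mul, Nat.cast_ofNat] at ha hb ⊢
  grind

lemma IsEquiDiff.card_dstar_le_four (hI : IsEquiDiff I) : #(dstar I) ≤ 4 :=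
  have ⟨_, hg⟩ := hI.exists_dstar_subset
  (card_le_card hg).trans card_le_four

lemma IsEquiDiff.card_dstar_le_two (hodd : Odd L) (hI : IsEquiDiff I) (htor : HasThreeTorsion I) :
    #(dstar I) ≤ 2 := by
  obtain ⟨g, hg⟩ := hI.exists_dstar_subset
  obtain ⟨u, hu, hu₃⟩ := htor
  have hg₃ : 3 * g = 0 := by
    have hu_mem := hg hu
    simp only [mem_insert, mem_singleton] at hu_mem
    have hdouble : 3 * g + 3 * g = 0 := by grind
    exact (ZMod.add_self_eq_zero_iff_eq_zero hodd).1 hdouble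
  have hg₂ : 2 * g = -g := by linear_combination hg₃
  have hpair : dstar I ⊆ {g, -g} := hg.trans (by simp [hg₂, insert_subset_iff])
  exact (card_le_card hpair).trans card_le_two

end Codewords

section Codes

variable {L : ℕ} {C D : Finset (Finset (ZMod L))}

lemma four_mul_card_le_sum_card_dstar_add (hodd : Odd L) (hD : ∀ I ∈ D, #I = 3) :
    4 * #D ≤ ∑ I ∈ D, #(dstar I) + 2 * #{I ∈ D | HasThreeTorsion I} := by
  rw [card_filter, mul_sum, ← sum_add_distrib, mul_comm, ← smul_eq_mul]
  refine card_nsmul_le_sum _ _ _ fun I hI => ?_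
  split_ifs with htor
  · linarith [two_le_card_dstar_of_hasThreeTorsion hodd htor]
  · linarith [four_le_card_dstar_of_not_hasThreeTorsion hodd (hD I hI) htor]

lemma sum_card_dstar_add_le_four_mul_card (hodd : Odd L) (hC : ∀ I ∈ C, IsEquiDiff I) :
    ∑ I ∈ C, #(dstar I) + 2 * #{I ∈ C | HasThreeTorsion I} ≤ 4 * #C := by
  rw [card_filter, mul_sum, ← sum_add_distrib, mul_comm, ← smul_eq_mul]
  refine sum_le_card_nsmul _ _ _ fun I hI => ?_
  split_ifs with htor
  · linarith [(hC I hI).card_dstar_le_two hodd htor]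
  · linarith [(hC I hI).card_dstar_le_four]

variable [NeZero L]

lemma IsCAC.card_hasThreeTorsion_le_one {ω : ℕ} (hD : IsCAC L ω D) :
    #{I ∈ D | HasThreeTorsion I} ≤ 1 := by
  refine card_le_one.2 fun I hI J hJ => ?_
  obtain ⟨hID, u, hu, hu₃⟩ := mem_filter.1 hI
  obtain ⟨hJD, v, hv, hv₃⟩ := mem_filter.1 hJ
  have huJ : u ∈ dstar J := by
    rcases eq_or_eq_neg_of_three_mul_eq_zero (mem_dstar.1 hu).2 hu₃ (mem_dstar.1 hv).2 hv₃
      with rfl | rfl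
    · exact hv
    · exact neg_mem_dstar hv
  by_contra hne
  exact disjoint_left.1 (hD.2 I hID J hJD hne) hu huJ

lemma IsCAC.card_hasThreeTorsion_le {ω : ℕ} (hD : IsCAC L ω D)
    (hleave : ∀ u : ZMod L, u ≠ 0 → 3 * u = 0 → u ∉ leave C) :
    #{I ∈ D | HasThreeTorsion I} ≤ #{I ∈ C | HasThreeTorsion I} := by
  rcases eq_empty_or_nonempty {I ∈ D | HasThreeTorsion I} with hempty | ⟨I, hI⟩
  · simp [hempty]
  · obtain ⟨-, u, hu, hu₃⟩ := mem_filter.1 hI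
    have hu₀ := (mem_dstar.1 hu).2
    obtain ⟨J, hJ, huJ⟩ : ∃ J ∈ C, u ∈ dset J := by
      simpa [mem_leave] using hleave u hu₀ hu₃
    have hJtor : HasThreeTorsion J := ⟨u, mem_dstar.2 ⟨huJ, hu₀⟩, hu₃⟩
    exact hD.card_hasThreeTorsion_le_one.trans (card_pos.2 ⟨J, mem_filter.2 ⟨hJ, hJtor⟩⟩)

lemma IsCAC.four_mul_card_le_add_ncard_leave (hodd : Odd L) (hD : IsCAC L 3 D)
    (hequi : ∀ I ∈ C, IsEquiDiff I)
    (hleave : ∀ u : ZMod L, u ≠ 0 → 3 * u = 0 → u ∉ leave C) :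
    4 * #D ≤ 4 * #C + (leave C).ncard := by
  have hD_le := four_mul_card_le_sum_card_dstar_add hodd hD.1
  have hC_ge := sum_card_dstar_add_le_four_mul_card hodd hequi
  have htor := hD.card_hasThreeTorsion_le hleave
  have hpacking := hD.sum_card_dstar_lt
  have hcovering := length_le_sum_card_dstar_add_ncard_leave C
  omega

end Codes

theorem optimal_of_small_leave (L : ℕ) (hL : 3 ≤ L) (hodd : Odd L)
    (C : Finset (Finset (ZMod L))) (hC : IsCAC L 3 C)
    (hequi : ∀ I ∈ C, IsEquiDiff I)
    (hcard : (leave C).ncard < 4)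
    (hnot : ¬ (3 ∣ L ∧ ((L / 3 : ℕ) : ZMod L) ∈ leave C ∧
        ((2 * L / 3 : ℕ) : ZMod L) ∈ leave C)) :
    C.card = MeCAC L 3 ∧ MeCAC L 3 = MCAC L 3 := by
  have : NeZero L := ⟨by omega⟩
  have hleave : ∀ u : ZMod L, u ≠ 0 → 3 * u = 0 → u ∉ leave C :=
    fun _ => notMem_leave_of_three_mul_eq_zero hnot
  have hmax : ∀ D, IsCAC L 3 D → #D ≤ #C := fun D hD => by
    have := hD.four_mul_card_le_add_ncard_leave hodd hequi hleave
    omega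
  have hMe : MeCAC L 3 = #C := IsGreatest.csSup_eq
    ⟨⟨C, hC, hequi, rfl⟩, by rintro _ ⟨D, hD, -, rfl⟩; exact hmax D hD⟩
  have hM : MCAC L 3 = #C := IsGreatest.csSup_eq
    ⟨⟨C, hC, rfl⟩, by rintro _ ⟨D, hD, rfl⟩; exact hmax D hD⟩
  exact ⟨hMe.symm, hMe.trans hM.symm⟩
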